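/- In the Brauer group of the field ℚ₁₇ of 17-adic numbers, the class of the quaternion algebra (17, 1) is trivial while the class of (17, 11) is nontrivial. Concretely: the quaternion algebra ℍ[ℚ₁₇, 17, 1] is not a division ring, whereas ℍ[ℚ₁₇, 17, 11] is a division ring. -/

import Mathlib

/-!
The algebra `(17, 1)` contains the zero divisor `1 + j`, since `(1 + j)(1 - j) = 1 - j² = 0`.

For `(17, 11)` the reduced norm of `r + a i + b j + c k` is
`(r² - 11 b²) - 17 (a² - 11 c²)`, and an element is invertible as soon as its reduced norm is
nonzero. Because `11` is not a square modulo `17`, the form `x² - 11 y²` satisfies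
`‖x² - 11 y²‖ = max ‖x‖ ‖y‖ ^ 2` on `ℚ_[17]` (`norm_sq_sub_eleven`), so its nonzero values have even
valuation. The two summands of the reduced norm therefore have valuations of opposite parity and
cannot cancel unless all coordinates vanish.
-/

open scoped Quaternion

instance : Fact (Nat.Prime 17) := ⟨by norm_num⟩

lemma norm_eq_one_of_toZMod_ne_zero {z : ℤ_[17]} (hz : PadicInt.toZMod z ≠ 0) : ‖z‖ = 1 := by
  by_contra h
  apply hz
  rw [← RingHom.mem_ker, PadicInt.ker_toZMod, IsLocalRing.mem_maximalIdeal, PadicInt.mem_nonunits]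
  exact lt_of_le_of_ne z.norm_le_one h

/-- Since `11` is a quadratic non-residue modulo `17`, a `17`-adic integer `1 - 11 t²` is a unit. -/
lemma norm_one_sub_eleven_mul_sq {t : ℚ_[17]} (ht : ‖t‖ ≤ 1) : ‖1 - 11 * t ^ 2‖ = 1 := by
  obtain ⟨u, rfl⟩ : ∃ u : ℤ_[17], (u : ℚ_[17]) = t := ⟨⟨t, ht⟩, rfl⟩
  have h : ‖(1 - 11 * u ^ 2 : ℤ_[17])‖ = 1 := by
    apply norm_eq_one_of_toZMod_ne_zero
    simp only [map_sub, map_mul, map_pow, map_one, map_ofNat]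
    generalize PadicInt.toZMod u = s
    revert s
    decide
  rw [PadicInt.norm_def] at h
  push_cast at h
  exact h

/-- Since `11` is a quadratic non-residue modulo `17`, a `17`-adic integer `t² - 11` is a unit. -/
lemma norm_sq_sub_eleven_eq_one {t : ℚ_[17]} (ht : ‖t‖ ≤ 1) : ‖t ^ 2 - 11‖ = 1 := by
  obtain ⟨u, rfl⟩ : ∃ u : ℤ_[17], (u : ℚ_[17]) = t := ⟨⟨t, ht⟩, rfl⟩
  have h : ‖(u ^ 2 - 11 : ℤ_[17])‖ = 1 := by
    apply norm_eq_one_of_toZMod_ne_zero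
    simp only [map_sub, map_pow, map_ofNat]
    generalize PadicInt.toZMod u = s
    revert s
    decide
  rw [PadicInt.norm_def] at h
  push_cast at h
  exact h

lemma norm_sq_sub_eleven (x y : ℚ_[17]) : ‖x ^ 2 - 11 * y ^ 2‖ = max ‖x‖ ‖y‖ ^ 2 := by
  rcases le_or_gt ‖y‖ ‖x‖ with h | h
  · rw [max_eq_left h]
    rcases eq_or_ne x 0 with rfl | hx
    · have hy : y = 0 := by simpa using h
      simp [hy]
    · have ht : ‖y / x‖ ≤ 1 := by
        rw [norm_div]
        exact div_le_one_of_le₀ h (norm_nonneg _)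
      have e : x ^ 2 - 11 * y ^ 2 = x ^ 2 * (1 - 11 * (y / x) ^ 2) := by field_simp
      rw [e, norm_mul, norm_one_sub_eleven_mul_sq ht, mul_one, norm_pow]
  · rw [max_eq_right h.le]
    have hy : y ≠ 0 := norm_pos_iff.1 ((norm_nonneg x).trans_lt h)
    have ht : ‖x / y‖ ≤ 1 := by
      rw [norm_div]
      exact div_le_one_of_le₀ h.le (norm_nonneg _)
    have e : x ^ 2 - 11 * y ^ 2 = y ^ 2 * ((x / y) ^ 2 - 11) := by field_simp
    rw [e, norm_mul, norm_sq_sub_eleven_eq_one ht, mul_one, norm_pow]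

/-- The valuations of `m²` and `17 n²` have opposite parity. -/
lemma eq_zero_of_norm_sq_eq {m n : ℚ_[17]} (h : ‖m‖ ^ 2 = ‖(17 : ℚ_[17])‖ * ‖n‖ ^ 2) :
    m = 0 ∧ n = 0 := by
  have h17 : ‖(17 : ℚ_[17])‖ = (17 : ℝ) ^ (-1 : ℤ) := by
    simpa using Padic.norm_p (p := 17)
  rcases eq_or_ne n 0 with rfl | hn
  · simpa using h
  rcases eq_or_ne m 0 with rfl | hm
  · simp_all
  exfalso
  rw [h17, Padic.norm_eq_zpow_neg_valuation hm, Padic.norm_eq_zpow_neg_valuation hn] at h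
  push_cast at h
  rw [← zpow_natCast, ← zpow_natCast, ← zpow_mul, ← zpow_mul, ← zpow_add₀ (by norm_num)] at h
  have := zpow_right_injective₀ (a := (17 : ℝ)) (by norm_num) (by norm_num) h
  push_cast at this
  omega

/-- The reduced norm form of `(17, 11)` is anisotropic over `ℚ_[17]`. -/
lemma reducedNorm_anisotropic {r a b c : ℚ_[17]}
    (h : r ^ 2 - 11 * b ^ 2 = 17 * (a ^ 2 - 11 * c ^ 2)) :
    r = 0 ∧ a = 0 ∧ b = 0 ∧ c = 0 := by
  have hn := congrArg norm h
  rw [norm_mul, norm_sq_sub_eleven, norm_sq_sub_eleven] at hn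
  have key (x y : ℚ_[17]) : ∃ m : ℚ_[17], max ‖x‖ ‖y‖ = ‖m‖ ∧ (m = 0 → x = 0 ∧ y = 0) := by
    rcases le_total ‖y‖ ‖x‖ with h | h
    · refine ⟨x, max_eq_left h, ?_⟩
      rintro rfl
      simpa using h
    · refine ⟨y, max_eq_right h, ?_⟩
      rintro rfl
      simpa using h
  obtain ⟨m, hm, hm0⟩ := key r b
  obtain ⟨n, hn', hn0⟩ := key a c
  rw [hm, hn'] at hn
  obtain ⟨h1, h2⟩ := eq_zero_of_norm_sq_eq hn
  exact ⟨(hm0 h1).1, (hn0 h2).1, (hm0 h1).2, (hn0 h2).2⟩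

theorem quaternion_17_1_split_and_17_11_division :
    (¬ ∀ x : ℍ[ℚ_[17], (17 : ℚ_[17]), (1 : ℚ_[17])], x ≠ 0 → IsUnit x) ∧
    (∀ x : ℍ[ℚ_[17], (17 : ℚ_[17]), (11 : ℚ_[17])], x ≠ 0 → IsUnit x) := by
  constructor
  · intro h
    have hu := h ⟨1, 0, 1, 0⟩ (fun e => one_ne_zero (congrArg QuaternionAlgebra.re e))
    have h0 : (⟨1, 0, 1, 0⟩ : ℍ[ℚ_[17], (17 : ℚ_[17]), (1 : ℚ_[17])]) * ⟨1, 0, -1, 0⟩ = 0 := by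
      ext <;> simp
    rw [hu.mul_right_eq_zero] at h0
    exact one_ne_zero (congrArg QuaternionAlgebra.re h0)
  · intro x hx
    have hN : (x * star x).re ≠ 0 := by
      intro h0
      apply hx
      obtain ⟨h1, h2, h3, h4⟩ := reducedNorm_anisotropic
        (r := x.re) (a := x.imI) (b := x.imJ) (c := x.imK) (by
          simp at h0
          linear_combination h0)
      ext <;> assumption
    have hU : IsUnit (x * star x) := by
      rw [QuaternionAlgebra.mul_star_eq_coe]
      exact (IsUnit.mk0 _ hN).map (algebraMap ℚ_[17] ℍ[ℚ_[17], (17 : ℚ_[17]), (11 : ℚ_[17])])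
    -- `x` commutes with its conjugate, so a unit product forces `x` to be a unit.
    have hc : Commute x (star x) := (star_comm_self' x).symm
    exact (hc.isUnit_mul_iff.1 hU).1
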